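/- Let p and q be distinct prime numbers, n = p·q, and λ = lcm(p−1, q−1). Let s be a finite index set, m : s → ℕ a family of messages, and r : s → ℕ a family of numbers each coprime to n. Then ( ∏_{i ∈ s} ( (1+n)^{m i} · (r i)^n ) )^λ ≡ 1 + (∑_{i ∈ s} m i)·λ·n (mod n²). (This is the end-to-end correctness of the MAB verification layer: homomorphically combining the Paillier ciphertexts of the individual amounts and then decrypting with λ recovers the total amount ∑ m_i.) -/

import Mathlib

theorem aux_binom (n k : ℕ) : (1 + n) ^ k ≡ 1 + k * n [MOD n ^ 2] := by
  induction k with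
  | zero => simp [Nat.ModEq]
  | succ k ih =>
    rw [pow_succ]
    refine (ih.mul_right (1 + n)).trans ?_
    have h : (1 + k * n) * (1 + n) = (1 + (k + 1) * n) + n ^ 2 * k := by ring
    rw [h]
    simp [Nat.ModEq]

theorem aux_fermat (p r e : ℕ) (hp : p.Prime) (hr : Nat.Coprime r p) (he : p - 1 ∣ e) :
    r ^ e ≡ 1 [MOD p] := by
  obtain ⟨c, rfl⟩ := he
  have h := (Nat.ModEq.pow_totient hr).pow c
  rwa [Nat.totient_prime hp, one_pow, ← pow_mul] at h

theorem aux_lift (n a : ℕ) (h : a ≡ 1 [MOD n]) : a ^ n ≡ 1 [MOD n ^ 2] := by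
  have h1 : (n : ℤ) ∣ (a : ℤ) - 1 := by
    have := (Nat.modEq_iff_dvd.mp h.symm)
    simpa using this
  have h2 := dvd_sub_pow_of_dvd_sub h1 1
  apply Nat.ModEq.symm
  apply Nat.modEq_iff_dvd.mpr
  simpa using h2

/-- End-to-end correctness of the MAB verification layer: multiplying the
Paillier ciphertexts `(1+n)^{m i} · (r i)^n` and raising the product to the
secret exponent `λ = lcm(p−1, q−1)` yields `1 + (∑ m i)·λ·n` modulo `n²`. -/
theorem mab_verification_correct (p q : ℕ) (hp : p.Prime) (hq : q.Prime)
    (hpq : p ≠ q) (n : ℕ) (hn : n = p * q)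
    (lam : ℕ) (hlam : lam = Nat.lcm (p - 1) (q - 1))
    {ι : Type*} (s : Finset ι) (m : ι → ℕ) (r : ι → ℕ)
    (hr : ∀ i ∈ s, Nat.Coprime (r i) n) :
    (∏ i ∈ s, ((1 + n) ^ m i * r i ^ n)) ^ lam ≡
      1 + (∑ i ∈ s, m i) * lam * n [MOD n ^ 2] := by
  have key : ∀ i ∈ s, (r i ^ n) ^ lam ≡ 1 [MOD n ^ 2] := by
    intro i hi
    have hc := hr i hi
    rw [← pow_mul, mul_comm, pow_mul]
    apply aux_lift
    rw [hn] at hc ⊢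
    refine (Nat.modEq_and_modEq_iff_modEq_mul ((Nat.coprime_primes hp hq).mpr hpq)).mp ⟨?_, ?_⟩
    · exact aux_fermat p _ _ hp (Nat.Coprime.coprime_mul_right_right hc)
        (hlam ▸ Nat.dvd_lcm_left _ _)
    · exact aux_fermat q _ _ hq (Nat.Coprime.coprime_mul_left_right hc)
        (hlam ▸ Nat.dvd_lcm_right _ _)
  have hprod : ∏ i ∈ s, (r i ^ n) ^ lam ≡ 1 [MOD n ^ 2] := by
    have : ∀ t : Finset ι, t ⊆ s → ∏ i ∈ t, (r i ^ n) ^ lam ≡ 1 [MOD n ^ 2] := by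
      classical
      intro t
      induction t using Finset.induction_on with
      | empty => intro _; simp [Nat.ModEq]
      | insert a t ha ih =>
        intro ht
        rw [Finset.prod_insert ha]
        simpa using (key a (ht (Finset.mem_insert_self a t))).mul
          (ih ((Finset.subset_insert a t).trans ht))
    exact this s (Finset.Subset.refl s)
  rw [Finset.prod_mul_distrib, Finset.prod_pow_eq_pow_sum, mul_pow, ← pow_mul,
    ← Finset.prod_pow s lam (fun i => r i ^ n)]
  simpa using (aux_binom n ((∑ i ∈ s, m i) * lam)).mul hprod
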